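/- arXiv:2005.13998 — 3 statements merged into one kernel-verified Lean document; each statement's English description precedes it below -/
import Mathlib

section
/- Let (A, τ) be a non-commutative probability space and let B, C be norm-closed unital *-subalgebras of A, both containing a norm-closed unital *-subalgebra A_0, with conditional expectations E_B, E_C, E_0 onto B, C, A_0 respectively. Assume the tower property E_0 ∘ E_B = E_0 and the independence property E_B ∘ E_C = E_0. Then for every x ∈ C and every y ∈ B one has E_0(y* x* x y) = E_0(y* E_0(x* x) y), and consequently ‖x y‖₂² = τ(y* E_0(x* x) y). -/
open scoped ComplexOrder

/-- A faithful tracial state on a unital C*-algebra. -/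
structure IsTracialState {A : Type*} [CStarAlgebra A] (τ : A →ₗ[ℂ] ℂ) : Prop where
  map_one : τ 1 = 1
  pos : ∀ x : A, 0 ≤ τ (star x * x)
  tracial : ∀ x y : A, τ (x * y) = τ (y * x)
  bounded : ∀ x : A, ‖τ x‖ ≤ ‖x‖
  faithful : ∀ x : A, τ (star x * x) = 0 → x = 0

/-- A (trace-preserving) conditional expectation onto a subset `B` of `A`. -/
structure IsCondExp {A : Type*} [CStarAlgebra A] (τ : A →ₗ[ℂ] ℂ) (B : Set A)
    (E : A →ₗ[ℂ] A) : Prop where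
  mem_range : ∀ x, E x ∈ B
  map_of_mem : ∀ b ∈ B, E b = b
  bimodule : ∀ a ∈ B, ∀ c ∈ B, ∀ x, E (a * x * c) = a * E x * c
  map_star : ∀ x, E (star x) = star (E x)
  contractive : ∀ x, ‖E x‖ ≤ ‖x‖
  trace_eq : ∀ x, τ (E x) = τ x

section Independence

variable {A : Type*} [CStarAlgebra A] {τ : A →ₗ[ℂ] ℂ} {B C : Set A} {EB EC E0 : A →ₗ[ℂ] A}

lemma IsCondExp.apply_eq_of_indep (hEC : IsCondExp τ C EC) (indep : ∀ x, EB (EC x) = E0 x)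
    {z : A} (hz : z ∈ C) : EB z = E0 z := by
  rw [← indep, hEC.map_of_mem z hz]

lemma IsCondExp.map_mul_mul_of_indep (hEB : IsCondExp τ B EB) (hEC : IsCondExp τ C EC)
    (indep : ∀ x, EB (EC x) = E0 x) {a c z : A} (ha : a ∈ B) (hc : c ∈ B) (hz : z ∈ C) :
    EB (a * z * c) = a * E0 z * c := by
  rw [hEB.bimodule a ha c hc, hEC.apply_eq_of_indep indep hz]

theorem condExp_covariance_of_indep_general (hEB : IsCondExp τ B EB) (hEC : IsCondExp τ C EC)
    (tower : ∀ x, E0 (EB x) = E0 x) (indep : ∀ x, EB (EC x) = E0 x)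
    {a c z : A} (ha : a ∈ B) (hc : c ∈ B) (hz : z ∈ C) :
    E0 (a * z * c) = E0 (a * E0 z * c) ∧ τ (a * z * c) = τ (a * E0 z * c) := by
  have hEB_mul : EB (a * z * c) = a * E0 z * c := hEB.map_mul_mul_of_indep hEC indep ha hc hz
  constructor
  · rw [← hEB_mul, tower]
  · rw [← hEB_mul, hEB.trace_eq]

end Independence

/-- If `B` and `C` are independent over `A₀` (i.e. `E_B ∘ E_C = E₀`) and the tower property
`E₀ ∘ E_B = E₀` holds, then for `x ∈ C`, `y ∈ B` one has
`E₀(y* x* x y) = E₀(y* E₀(x* x) y)` and `‖x y‖₂² = τ(y* E₀(x* x) y)`. -/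
theorem condExp_covariance_of_indep {A : Type*} [CStarAlgebra A]
    (τ : A →ₗ[ℂ] ℂ) (hτ : IsTracialState τ)
    (B C A0 : StarSubalgebra ℂ A)
    (hB : IsClosed (B : Set A)) (hC : IsClosed (C : Set A)) (hA0 : IsClosed (A0 : Set A))
    (hA0B : (A0 : Set A) ⊆ B) (hA0C : (A0 : Set A) ⊆ C)
    (EB EC E0 : A →ₗ[ℂ] A)
    (hEB : IsCondExp τ (B : Set A) EB) (hEC : IsCondExp τ (C : Set A) EC)
    (hE0 : IsCondExp τ (A0 : Set A) E0)
    (tower : ∀ x, E0 (EB x) = E0 x)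
    (indep : ∀ x, EB (EC x) = E0 x) :
    ∀ x ∈ C, ∀ y ∈ B,
      E0 (star y * (star x * x) * y) = E0 (star y * E0 (star x * x) * y) ∧
      τ (star (x * y) * (x * y)) = τ (star y * E0 (star x * x) * y) := by
  intro x hx y hy
  simpa only [star_mul, mul_assoc] using condExp_covariance_of_indep_general hEB hEC tower indep
    (star_mem hy) hy (mul_mem (star_mem hx) hx)
end

section
/- Let (A, τ, S, (A_I), (E_I)) be an A_0-valued white noise and let (c_t)_{t≥0} be a centred, norm-continuous additive cocycle for the shift S. Then for every x ∈ A_0 and every t ≥ 0 one has E_0(c_t* x c_t) = t · E_0(c_1* x c_1). -/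
open scoped ComplexOrder

/-- An `A₀`-valued white noise `(A, τ, S, (A_I), (E_I))`.  The filtration is indexed by
closed intervals `[a, b]` of `ℝ` with (possibly infinite) endpoints `a b : EReal`. -/
structure WhiteNoise (A : Type*) [CStarAlgebra A] (τ : A →ₗ[ℂ] ℂ) where
  tracial : IsTracialState τ
  /-- the filtration algebra `A_{[a,b]}` -/
  alg : EReal → EReal → StarSubalgebra ℂ A
  alg_isClosed : ∀ a b, IsClosed (alg a b : Set A)
  alg_mono : ∀ a b a' b' : EReal, a' ≤ a → b ≤ b' → (alg a b : Set A) ⊆ alg a' b'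
  /-- the distinguished subalgebra `A₀` -/
  A0 : StarSubalgebra ℂ A
  A0_isClosed : IsClosed (A0 : Set A)
  A0_le : ∀ a b, (A0 : Set A) ⊆ alg a b
  /-- the conditional expectation `E_{[a,b]}` onto `A_{[a,b]}` -/
  E : EReal → EReal → (A →ₗ[ℂ] A)
  /-- the conditional expectation `E₀` onto `A₀` -/
  E0 : A →ₗ[ℂ] A
  E_condExp : ∀ a b, IsCondExp τ (alg a b) (E a b)
  E0_condExp : IsCondExp τ A0 E0
  /-- the white noise shift: a one-parameter group of trace-preserving `*`-automorphisms -/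
  S : ℝ → (A ≃⋆ₐ[ℂ] A)
  S_zero : ∀ x, S 0 x = x
  S_add : ∀ s t x, S (s + t) x = S s (S t x)
  S_trace : ∀ t x, τ (S t x) = τ x
  S_alg : ∀ (t : ℝ) (a b : EReal),
    (S t) '' (alg a b : Set A) = (alg (a + (t : EReal)) (b + (t : EReal)) : Set A)
  S_fix : ∀ t, ∀ a ∈ A0, S t a = a
  E0_S : ∀ t x, E0 (S t x) = E0 x
  /-- independence over `A₀`: `E_I ∘ E_J = E₀` whenever the interiors of `I`, `J` are disjoint -/
  indep : ∀ a b c d : EReal,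
    (∀ x : ℝ, ¬((a < (x : EReal) ∧ (x : EReal) < b) ∧ (c < (x : EReal) ∧ (x : EReal) < d))) →
    ∀ y, E a b (E c d y) = E0 y
  /-- the tower property `E₀ ∘ E_I = E₀` -/
  tower : ∀ (a b : EReal) (y : A), E0 (E a b y) = E0 y

/-!
For centred cocycles `b`, `c`, the scalars `τ (b_t* c_t)` are additive in `t`: in the expansion of
`b_{s+t}* c_{s+t}` the increments `S_t b_s`, `S_t c_s` lie in `A_{[t,s+t]}`, and the conditional
expectation onto that algebra kills `b_t` and `c_t`. For `b = c` they are also nonnegative, and a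
nonnegative additive function on the half-line is monotone, hence linear. Polarisation carries the
linearity over to pairs `b`, `c`. As `t ↦ b_t a*` and `t ↦ x c_t` are again centred cocycles for
`a, x ∈ A₀`, this computes `τ (a b_t* x c_t)` for every `a ∈ A₀`, and by faithfulness of `τ` these
traces determine `E₀ (b_t* x c_t)`.
-/

open Filter Topology
open scoped NNReal

theorem monotone_of_addMonoidHom_nonneg {M E : Type*} [AddMonoid M] [Preorder M]
    [CanonicallyOrderedAdd M] [AddMonoid E] [Preorder E] [AddLeftMono E] (f : M →+ E)
    (hf : ∀ t, 0 ≤ f t) : Monotone f := by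
  intro s t hst
  obtain ⟨r, rfl⟩ := le_iff_exists_add.mp hst
  simpa only [map_add] using le_add_of_nonneg_right (hf r)

theorem nnreal_addMonoidHom_apply_eq_smul_of_nonneg {E : Type*} [AddCommMonoid E] [PartialOrder E]
    [AddLeftMono E] [TopologicalSpace E] [OrderClosedTopology E] [Module ℝ≥0 E]
    [ContinuousSMul ℝ≥0 E] (f : ℝ≥0 →+ E) (hf : ∀ t, 0 ≤ f t) (t : ℝ≥0) :
    f t = t • f 1 := by
  have hmono : Monotone f := monotone_of_addMonoidHom_nonneg f hf
  have hrat (m n : ℕ) : f (m / n) = (m / n : ℝ≥0) • f 1 := by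
    simpa using map_nnratCast_smul f ℝ≥0 ℝ≥0 (m / n) 1
  have hceil : Tendsto (fun n : ℕ ↦ (⌈t * n⌉₊ / n : ℝ≥0)) atTop (𝓝 t) :=
    NNReal.tendsto_coe.mp
      ((tendsto_nat_ceil_mul_div_atTop t.2).comp tendsto_natCast_atTop_atTop)
  have hfloor : Tendsto (fun n : ℕ ↦ (⌊t * n⌋₊ / n : ℝ≥0)) atTop (𝓝 t) :=
    NNReal.tendsto_coe.mp
      ((tendsto_nat_floor_mul_div_atTop t.2).comp tendsto_natCast_atTop_atTop)
  apply le_antisymm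
  · refine ge_of_tendsto (hceil.smul_const _) ?_
    filter_upwards [eventually_gt_atTop 0] with n hn
    rw [← hrat]
    exact hmono ((le_div_iff₀ (by positivity)).mpr (Nat.le_ceil _))
  · refine le_of_tendsto (hfloor.smul_const _) ?_
    filter_upwards [eventually_gt_atTop 0] with n hn
    rw [← hrat]
    exact hmono ((div_le_iff₀ (by positivity)).mpr (Nat.floor_le (by positivity)))

theorem four_smul_star_mul {A : Type*} [NonUnitalRing A] [StarRing A] [Module ℂ A]
    [IsScalarTower ℂ A A] [SMulCommClass ℂ A A] [StarModule ℂ A] (a b : A) :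
    (4 : ℂ) • (star a * b) =
      star (a + b) * (a + b) - star (a - b) * (a - b)
        - Complex.I • (star (a + Complex.I • b) * (a + Complex.I • b))
        + Complex.I • (star (a - Complex.I • b) * (a - Complex.I • b)) := by
  simp only [star_add, star_sub, star_smul, Complex.star_def, Complex.conj_I, add_mul, sub_mul,
    mul_add, mul_sub, smul_mul_assoc, mul_smul_comm, smul_add, smul_sub, neg_smul, neg_mul,
    smul_neg, smul_smul, Complex.I_mul_I]
  module

namespace IsCondExp

variable {A : Type*} [CStarAlgebra A] {τ : A →ₗ[ℂ] ℂ} {B : StarSubalgebra ℂ A} {E : A →ₗ[ℂ] A}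

theorem map_mul_left (hE : IsCondExp τ B E) {a : A} (ha : a ∈ B) (x : A) :
    E (a * x) = a * E x := by
  simpa only [mul_one] using hE.bimodule a ha 1 (one_mem B) x

theorem map_mul_right (hE : IsCondExp τ B E) {a : A} (ha : a ∈ B) (x : A) :
    E (x * a) = E x * a := by
  simpa only [one_mul] using hE.bimodule 1 (one_mem B) a ha x

theorem trace_mul_apply (hE : IsCondExp τ B E) {a : A} (ha : a ∈ B) (x : A) :
    τ (a * E x) = τ (a * x) := by
  rw [← hE.map_mul_left ha, hE.trace_eq]

theorem trace_apply_mul (hE : IsCondExp τ B E) {a : A} (ha : a ∈ B) (x : A) :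
    τ (E x * a) = τ (x * a) := by
  rw [← hE.map_mul_right ha, hE.trace_eq]

theorem apply_eq_apply_of_trace_mul_eq (hE : IsCondExp τ B E) (hτ : IsTracialState τ) {x y : A}
    (h : ∀ a ∈ B, τ (a * x) = τ (a * y)) : E x = E y := by
  refine sub_eq_zero.mp (hτ.faithful _ ?_)
  have hmem : star (E x - E y) ∈ B := star_mem (sub_mem (hE.mem_range x) (hE.mem_range y))
  rw [← map_sub] at hmem ⊢
  rw [hE.trace_mul_apply hmem, mul_sub, map_sub, h _ hmem, sub_self]

end IsCondExp

namespace WhiteNoise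

variable {A : Type*} [CStarAlgebra A] {τ : A →ₗ[ℂ] ℂ} (W : WhiteNoise A τ)

theorem S_mem_alg {a b : EReal} {x : A} (hx : x ∈ W.alg a b) (t : ℝ) :
    W.S t x ∈ W.alg (a + t) (b + t) :=
  (W.S_alg t a b).subset (Set.mem_image_of_mem _ hx)

theorem E_eq_E0_of_mem_alg {a b a' b' : EReal} (hb : b ≤ a') {x : A} (hx : x ∈ W.alg a b) :
    W.E a' b' x = W.E0 x := by
  have hdisj (r : ℝ) : ¬((a' < (r : EReal) ∧ (r : EReal) < b') ∧
      (a < (r : EReal) ∧ (r : EReal) < b)) :=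
    fun h ↦ (h.2.2.trans_le hb).not_gt h.1.1
  simpa only [(W.E_condExp a b).map_of_mem x hx] using W.indep a' b' a b hdisj x

/-- The space of centred additive cocycles for the shift of `W`. Cocycles are functions on all of
`ℝ`, but only their values at nonnegative times are constrained. -/
def centredCocycles : Submodule ℂ (ℝ → A) where
  carrier := {c | (∀ t : ℝ, 0 ≤ t → c t ∈ W.alg 0 (t : EReal)) ∧
    (∀ s t : ℝ, 0 ≤ s → 0 ≤ t → c (s + t) = W.S t (c s) + c t) ∧
    ∀ t : ℝ, 0 ≤ t → W.E0 (c t) = 0}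
  zero_mem' := by simp
  add_mem' := by
    rintro b c ⟨hb, hb', hb0⟩ ⟨hc, hc', hc0⟩
    refine ⟨fun t ht ↦ add_mem (hb t ht) (hc t ht), fun s t hs ht ↦ ?_, fun t ht ↦ ?_⟩
    · simp only [Pi.add_apply, hb' s t hs ht, hc' s t hs ht, map_add, add_add_add_comm]
    · simp only [Pi.add_apply, map_add, hb0 t ht, hc0 t ht, add_zero]
  smul_mem' := by
    rintro z c ⟨hc, hc', hc0⟩
    refine ⟨fun t ht ↦ SMulMemClass.smul_mem z (hc t ht), fun s t hs ht ↦ ?_, fun t ht ↦ ?_⟩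
    · simp only [Pi.smul_apply, hc' s t hs ht, map_smul, smul_add]
    · simp only [Pi.smul_apply, map_smul, hc0 t ht, smul_zero]

variable {W} {b c : ℝ → A}

theorem mul_left_mem_centredCocycles {a : A} (ha : a ∈ W.A0) (hc : c ∈ W.centredCocycles) :
    (fun t ↦ a * c t) ∈ W.centredCocycles := by
  obtain ⟨hadapt, hcoc, hcentred⟩ := hc
  refine ⟨fun t ht ↦ mul_mem (W.A0_le _ _ ha) (hadapt t ht), fun s t hs ht ↦ ?_, fun t ht ↦ ?_⟩
  · simp only [hcoc s t hs ht, mul_add, map_mul, W.S_fix t a ha]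
  · rw [W.E0_condExp.map_mul_left ha, hcentred t ht, mul_zero]

theorem mul_right_mem_centredCocycles {a : A} (ha : a ∈ W.A0) (hc : c ∈ W.centredCocycles) :
    (fun t ↦ c t * a) ∈ W.centredCocycles := by
  obtain ⟨hadapt, hcoc, hcentred⟩ := hc
  refine ⟨fun t ht ↦ mul_mem (hadapt t ht) (W.A0_le _ _ ha), fun s t hs ht ↦ ?_, fun t ht ↦ ?_⟩
  · simp only [hcoc s t hs ht, add_mul, map_mul, W.S_fix t a ha]
  · rw [W.E0_condExp.map_mul_right ha, hcentred t ht, zero_mul]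

theorem trace_star_mul_add (hb : b ∈ W.centredCocycles) (hc : c ∈ W.centredCocycles) {s t : ℝ}
    (hs : 0 ≤ s) (ht : 0 ≤ t) :
    τ (star (b (s + t)) * c (s + t)) = τ (star (b s) * c s) + τ (star (b t) * c t) := by
  obtain ⟨hb_adapt, hb_coc, hb_centred⟩ := hb
  obtain ⟨hc_adapt, hc_coc, hc_centred⟩ := hc
  have hE := W.E_condExp (0 + t) (s + t)
  have hEb : W.E (0 + t) (s + t) (b t) = 0 := by
    rw [W.E_eq_E0_of_mem_alg (zero_add _).ge (hb_adapt t ht), hb_centred t ht]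
  have hEc : W.E (0 + t) (s + t) (c t) = 0 := by
    rw [W.E_eq_E0_of_mem_alg (zero_add _).ge (hc_adapt t ht), hc_centred t ht]
  have hcross_left : τ (star (W.S t (b s)) * c t) = 0 := by
    rw [← hE.trace_mul_apply (star_mem (W.S_mem_alg (hb_adapt s hs) t)), hEc, mul_zero, map_zero]
  have hcross_right : τ (star (b t) * W.S t (c s)) = 0 := by
    rw [← hE.trace_apply_mul (W.S_mem_alg (hc_adapt s hs) t), hE.map_star, hEb, star_zero,
      zero_mul, map_zero]
  have hdiag : τ (star (W.S t (b s)) * W.S t (c s)) = τ (star (b s) * c s) := by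
    rw [← map_star, ← map_mul, W.S_trace]
  rw [hb_coc s t hs ht, hc_coc s t hs ht, star_add, add_mul, mul_add, mul_add]
  simp only [map_add, hcross_left, hcross_right, hdiag, add_zero, zero_add]

theorem trace_star_mul_self (hc : c ∈ W.centredCocycles) {t : ℝ} (ht : 0 ≤ t) :
    τ (star (c t) * c t) = t * τ (star (c 1) * c 1) := by
  let f : ℝ≥0 →+ ℂ :=
    { toFun := fun r ↦ τ (star (c r) * c r)
      map_zero' := by simpa using trace_star_mul_add hc hc le_rfl le_rfl
      map_add' := fun r s ↦ trace_star_mul_add hc hc r.2 s.2 }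
  lift t to ℝ≥0 using ht
  exact nnreal_addMonoidHom_apply_eq_smul_of_nonneg f (fun r ↦ W.tracial.pos (c r)) t

theorem trace_star_mul (hb : b ∈ W.centredCocycles) (hc : c ∈ W.centredCocycles) {t : ℝ}
    (ht : 0 ≤ t) : τ (star (b t) * c t) = t * τ (star (b 1) * c 1) := by
  have polarization (r : ℝ) := congrArg τ (four_smul_star_mul (b r) (c r))
  simp only [map_add, map_sub, map_smul, smul_eq_mul] at polarization
  have hIc : Complex.I • c ∈ W.centredCocycles := Submodule.smul_mem _ _ hc
  have hadd := trace_star_mul_self (add_mem hb hc) ht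
  have hsub := trace_star_mul_self (sub_mem hb hc) ht
  have haddI := trace_star_mul_self (add_mem hb hIc) ht
  have hsubI := trace_star_mul_self (sub_mem hb hIc) ht
  simp only [Pi.add_apply, Pi.sub_apply, Pi.smul_apply] at hadd hsub haddI hsubI
  linear_combination (polarization t - t * polarization 1 + hadd - hsub
    - Complex.I * haddI + Complex.I * hsubI) / 4

end WhiteNoise

theorem centred_additive_cocycle_covariance_general {A : Type*} [CStarAlgebra A]
    {τ : A →ₗ[ℂ] ℂ} {W : WhiteNoise A τ} {b c : ℝ → A} (hb : b ∈ W.centredCocycles)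
    (hc : c ∈ W.centredCocycles) {x : A} (hx : x ∈ W.A0) {t : ℝ} (ht : 0 ≤ t) :
    W.E0 (star (b t) * x * c t) = (t : ℂ) • W.E0 (star (b 1) * x * c 1) := by
  rw [← map_smul]
  refine W.E0_condExp.apply_eq_apply_of_trace_mul_eq W.tracial fun a ha ↦ ?_
  have h := WhiteNoise.trace_star_mul
    (WhiteNoise.mul_right_mem_centredCocycles (star_mem ha) hb)
    (WhiteNoise.mul_left_mem_centredCocycles hx hc) ht
  simpa only [star_mul, star_star, mul_smul_comm, map_smul, smul_eq_mul, mul_assoc] using h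

/-- For a centred norm-continuous additive cocycle `c` of a white noise,
`E₀(c_t* x c_t) = t • E₀(c_1* x c_1)` for all `x ∈ A₀` and `t ≥ 0`. -/
theorem centred_additive_cocycle_covariance {A : Type*} [CStarAlgebra A]
    (τ : A →ₗ[ℂ] ℂ) (W : WhiteNoise A τ) (c : ℝ → A)
    (hadapt : ∀ t : ℝ, 0 ≤ t → c t ∈ W.alg 0 (t : EReal))
    (hcoc : ∀ s t : ℝ, 0 ≤ s → 0 ≤ t → c (s + t) = W.S t (c s) + c t)
    (hcentred : ∀ t : ℝ, 0 ≤ t → W.E0 (c t) = 0)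
    (hcont : ContinuousOn c (Set.Ici 0)) :
    ∀ x ∈ W.A0, ∀ t : ℝ, 0 ≤ t →
      W.E0 (star (c t) * x * c t) = (t : ℂ) • W.E0 (star (c 1) * x * c 1) :=
  fun _ hx _ ht ↦ centred_additive_cocycle_covariance_general
    ⟨hadapt, hcoc, hcentred⟩ ⟨hadapt, hcoc, hcentred⟩ hx ht
end

section
/- Let (A, τ, S, (A_I), (E_I)) be an A_0-valued white noise and let (c_t)_{t≥0} be a centred, norm-continuous additive cocycle for the shift S. For a partition P = {0 = s_0 < s_1 < … < s_n = t} of [0, t] with mesh |P| = max_j (s_{j+1} − s_j), set Q_P := Σ_{j=0}^{n−1} (c_{s_{j+1}} − c_{s_j})* (c_{s_{j+1}} − c_{s_j}). Then the quadratic variation sums form a Cauchy net in the norm ‖x‖₁ = τ(|x|) as the mesh tends to 0: for every t > 0 and every ε > 0 there exists δ > 0 such that for any two partitions P, P' of [0, t] with |P| < δ and |P'| < δ one has τ(|Q_P − Q_{P'}|) < ε, where |y| = (y* y)^{1/2} is defined via the continuous functional calculus. -/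
open scoped ComplexOrder

/-!
The increment of the cocycle over `[u, v]` is a shift of `c_{v-u}`, so it lies in `A_{[u,v]}`, and
independence makes it orthogonal to `A_{[0,u]}`: the cocycle is a martingale for `u ↦ A_{[0,u]}`.

Compare two partitions of `[a, b]` through their stopped quadratic variation processes `Q` and `Q'`.
Between consecutive points of the two partitions, with `p` and `p'` the last points passed, the
difference `D = Q - Q'` has increment `D_v - D_u = z + z*`, where `z = (c_{p'} - c_p)* (c_v - c_u)`.
The martingale property and the trace make `z + z*` orthogonal to `D_u` in the GNS space of the
trace, and `‖z‖₂ ≤ ω ‖c_v - c_u‖₂`, where `ω` is the modulus of continuity of `c` at the mesh. Hence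
`4 ω² ‖c_u - c_a‖₂² - ‖D_u‖₂²` increases with `u`, so that `‖D_b‖₂ ≤ 2 ω ‖c_b - c_a‖₂`, and the
`L¹`-norm is controlled by the `L²`-norm.
-/

open Set

section Trace

variable {A : Type*} [NonUnitalCStarAlgebra A] [PartialOrder A] [StarOrderedRing A]
  {φ : A →ₚ[ℂ] ℂ}

theorem norm_toPreGNS_mul_le (x y : A) :
    ‖φ.toPreGNS (x * y)‖ ≤ ‖x‖ * ‖φ.toPreGNS y‖ := by
  have h := (φ.gnsNonUnitalStarAlgHom x).le_of_opNorm_le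
    (NonUnitalStarAlgHom.norm_apply_le φ.gnsNonUnitalStarAlgHom x) (φ.toPreGNS y)
  simpa only [PositiveLinearMap.gnsNonUnitalStarAlgHom_apply_coe,
    UniformSpace.Completion.norm_coe, PositiveLinearMap.leftMulMapPreGNS_apply,
    PositiveLinearMap.ofPreGNS_toPreGNS] using h

theorem norm_toPreGNS_add_sq {x y : A} (h : φ (star x * y) = 0) :
    ‖φ.toPreGNS (x + y)‖ ^ 2 = ‖φ.toPreGNS x‖ ^ 2 + ‖φ.toPreGNS y‖ ^ 2 := by
  simpa only [map_add, sq] using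
    norm_add_sq_eq_norm_sq_add_norm_sq_of_inner_eq_zero (φ.toPreGNS x) (φ.toPreGNS y) h

theorem norm_toPreGNS_star (hφ : ∀ x y, φ (x * y) = φ (y * x)) (x : A) :
    ‖φ.toPreGNS (star x)‖ = ‖φ.toPreGNS x‖ := by
  simp only [PositiveLinearMap.preGNS_norm_def, PositiveLinearMap.ofPreGNS_toPreGNS, star_star,
    hφ x (star x)]

theorem norm_toPreGNS_add_add_star_sq_le (hφ : ∀ x y, φ (x * y) = φ (y * x)) {x z : A}
    (h : φ (star x * z) = 0) (h' : φ (x * z) = 0) :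
    ‖φ.toPreGNS (x + (z + star z))‖ ^ 2 ≤ ‖φ.toPreGNS x‖ ^ 2 + 4 * ‖φ.toPreGNS z‖ ^ 2 := by
  have h_star : φ (star x * star z) = 0 := by
    rw [← star_mul, map_star, hφ, h', star_zero]
  have h_orth : φ (star x * (z + star z)) = 0 := by rw [mul_add, map_add, h, h_star, add_zero]
  have h_norm : ‖φ.toPreGNS (z + star z)‖ ≤ 2 * ‖φ.toPreGNS z‖ := by
    rw [map_add]
    refine (norm_add_le _ _).trans_eq ?_
    rw [norm_toPreGNS_star hφ, two_mul]
  rw [norm_toPreGNS_add_sq h_orth]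
  nlinarith [norm_nonneg (φ.toPreGNS (z + star z))]

theorem norm_apply_cfcAbs_le {A : Type*} [CStarAlgebra A] [PartialOrder A] [StarOrderedRing A]
    (φ : A →ₚ[ℂ] ℂ) (x : A) :
    ‖φ (CFC.abs x)‖ ≤ ‖φ.toPreGNS 1‖ * ‖φ.toPreGNS x‖ := by
  have h_norm : ‖φ.toPreGNS (CFC.abs x)‖ = ‖φ.toPreGNS x‖ := by
    simp only [PositiveLinearMap.preGNS_norm_def, PositiveLinearMap.ofPreGNS_toPreGNS,
      (CFC.abs_nonneg x).star_eq, CFC.abs_mul_abs]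
  simpa only [PositiveLinearMap.preGNS_inner_def, PositiveLinearMap.ofPreGNS_toPreGNS, star_one,
    one_mul, h_norm] using norm_inner_le_norm (𝕜 := ℂ) (φ.toPreGNS 1) (φ.toPreGNS (CFC.abs x))

end Trace

section Partition

theorem monotoneOn_of_forall_notMem_Ioo {α β : Type*} [LinearOrder α] [Preorder β] {f : α → β}
    {I : Set α} [I.OrdConnected] (B : Finset α)
    (h : ∀ u ∈ I, ∀ v ∈ I, u < v → (∀ x ∈ B, x ∉ Ioo u v) → f u ≤ f v) : MonotoneOn f I := by
  induction B using Finset.induction_on with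
  | empty =>
    intro u hu v hv huv
    rcases huv.eq_or_lt with rfl | huv
    · exact le_rfl
    · exact h u hu v hv huv (by simp)
  | insert x B _ ih =>
    refine ih fun u hu v hv huv hB ↦ ?_
    by_cases hx : x ∈ Ioo u v
    · have hxI : x ∈ I := I.Icc_subset hu hv (Ioo_subset_Icc_self hx)
      have h_left : f u ≤ f x := h u hu x hxI hx.1 <| by
        simpa using fun y hy huy ↦ not_lt.1 fun hyx ↦ hB y hy ⟨huy, hyx.trans hx.2⟩
      have h_right : f x ≤ f v := h x hxI v hv hx.2 <| by
        simpa using fun y hy hxy ↦ not_lt.1 fun hyv ↦ hB y hy ⟨hx.1.trans hxy, hyv⟩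
      exact h_left.trans h_right
    · exact h u hu v hv huv ((Finset.forall_mem_insert ..).2 ⟨hx, hB⟩)

theorem exists_le_le_succ_of_forall_notMem_Ioo {α : Type*} [LinearOrder α] {s : ℕ → α} {n : ℕ}
    {u v : α} (huv : u < v) (hu : s 0 ≤ u) (hv : v ≤ s n) (h : ∀ j ≤ n, s j ∉ Ioo u v) :
    ∃ j < n, s j ≤ u ∧ v ≤ s (j + 1) := by
  induction n with
  | zero => exact absurd (hu.trans_lt huv) hv.not_gt
  | succ n ih =>
    by_cases hvn : v ≤ s n
    · obtain ⟨j, hj, hju⟩ := ih hvn fun j hj ↦ h j (hj.trans n.le_succ)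
      exact ⟨j, hj.trans n.lt_succ_self, hju⟩
    · have hnu : s n ≤ u := not_lt.1 fun hun ↦ h n n.le_succ ⟨hun, not_le.1 hvn⟩
      exact ⟨n, n.lt_succ_self, hnu, hv⟩

/-- A partition `a = s 0 ≤ s 1 ≤ ⋯ ≤ s n = b` of `[a, b]` of mesh less than `δ`. Repeated points are
allowed, and the values of `s` beyond `n` are irrelevant. -/
structure IsPartition (a b δ : ℝ) (n : ℕ) (s : ℕ → ℝ) : Prop where
  left_eq : s 0 = a
  right_eq : s n = b
  le_succ : ∀ j < n, s j ≤ s (j + 1)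
  sub_lt : ∀ j < n, s (j + 1) - s j < δ

namespace IsPartition

variable {a b δ : ℝ} {n : ℕ} {s : ℕ → ℝ}

theorem monotoneOn (hs : IsPartition a b δ n s) : MonotoneOn s (Iic n) :=
  monotoneOn_of_le_succ ordConnected_Iic fun j _ _ hj ↦ hs.le_succ j (Nat.succ_le_iff.1 hj)

theorem mem_Icc (hs : IsPartition a b δ n s) {j : ℕ} (hj : j ≤ n) : s j ∈ Icc a b := by
  rw [← hs.left_eq, ← hs.right_eq]
  exact ⟨hs.monotoneOn n.zero_le hj j.zero_le, hs.monotoneOn hj (mem_Iic.2 le_rfl) hj⟩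

theorem le (hs : IsPartition a b δ n s) : a ≤ b :=
  (hs.mem_Icc n.zero_le).1.trans (hs.mem_Icc n.zero_le).2

end IsPartition

end Partition

section QuadraticVariation

variable {A : Type*} [NonUnitalRing A] [StarRing A]

/-- The discrete quadratic variation `Σ_j (c_{s_{j+1}} - c_{s_j})* (c_{s_{j+1}} - c_{s_j})` of `c`
along the points `s 0, …, s n`. -/
def quadVarSum {ι : Type*} (c : ι → A) (s : ℕ → ι) (n : ℕ) : A :=
  ∑ j ∈ Finset.range n, star (c (s (j + 1)) - c (s j)) * (c (s (j + 1)) - c (s j))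

/-- The discrete quadratic variation process along `s 0, …, s n`: its value at time `u` is the
quadratic variation sum of `c` stopped at `u`. -/
def quadVarProcess {ι : Type*} [LinearOrder ι] (c : ι → A) (s : ℕ → ι) (n : ℕ) (u : ι) : A :=
  quadVarSum (fun x ↦ c (min x u)) s n

theorem quadVarProcess_sub_eq {ι : Type*} [LinearOrder ι] (c : ι → A) {s : ℕ → ι} {n j : ℕ}
    (hs : MonotoneOn s (Iic n)) (hj : j < n) {u v : ι} (hju : s j ≤ u) (huv : u ≤ v)
    (hvj : v ≤ s (j + 1)) :
    quadVarProcess c s n v - quadVarProcess c s n u =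
      star (c v - c (s j)) * (c v - c (s j)) - star (c u - c (s j)) * (c u - c (s j)) := by
  rw [quadVarProcess, quadVarProcess, quadVarSum, quadVarSum, ← Finset.sum_sub_distrib,
    Finset.sum_eq_single_of_mem j (Finset.mem_range.2 hj)]
  · simp only [min_eq_left hju, min_eq_left (hju.trans huv), min_eq_right hvj,
      min_eq_right (huv.trans hvj)]
  intro i hi hij
  have hin : i + 1 ≤ n := Finset.mem_range.1 hi
  rcases hij.lt_or_gt with hij | hji
  · have hi1 : s (i + 1) ≤ u := (hs hin hj.le hij).trans hju
    have hi0 : s i ≤ u := (hs (i.le_succ.trans hin) hj.le hij.le).trans hju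
    simp only [min_eq_left hi0, min_eq_left hi1, min_eq_left (hi0.trans huv),
      min_eq_left (hi1.trans huv), sub_self]
  · have hi0 : v ≤ s i := hvj.trans (hs hj (i.le_succ.trans hin) hji)
    have hi1 : v ≤ s (i + 1) := hvj.trans (hs hj hin (hji.trans i.lt_succ_self))
    simp only [min_eq_right hi0, min_eq_right hi1, min_eq_right (huv.trans hi0),
      min_eq_right (huv.trans hi1), sub_self, mul_zero]

namespace IsPartition

variable {a b δ : ℝ} {n : ℕ} {s : ℕ → ℝ}

theorem quadVarProcess_left (hs : IsPartition a b δ n s) (c : ℝ → A) :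
    quadVarProcess c s n a = 0 := by
  rw [quadVarProcess, quadVarSum]
  refine Finset.sum_eq_zero fun j hj ↦ ?_
  have hjn := Finset.mem_range.1 hj
  simp only [min_eq_right (hs.mem_Icc hjn).1, min_eq_right (hs.mem_Icc hjn.le).1, sub_self,
    mul_zero]

theorem quadVarProcess_right (hs : IsPartition a b δ n s) (c : ℝ → A) :
    quadVarProcess c s n b = quadVarSum c s n := by
  rw [quadVarProcess, quadVarSum, quadVarSum]
  refine Finset.sum_congr rfl fun j hj ↦ ?_
  have hjn := Finset.mem_range.1 hj
  simp only [min_eq_left (hs.mem_Icc hjn).2, min_eq_left (hs.mem_Icc hjn.le).2]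

end IsPartition

/-- If `p` and `p'` are the last points of two partitions before `u`, this is the increment over
`[u, v]` of the difference of the two quadratic variation processes. -/
theorem star_sub_mul_sub_sub_eq (p p' x y : A) :
    (star (y - p) * (y - p) - star (x - p) * (x - p)) -
        (star (y - p') * (y - p') - star (x - p') * (x - p')) =
      star (p' - p) * (y - x) + star (star (p' - p) * (y - x)) := by
  simp only [star_sub, star_mul, star_star]
  noncomm_ring

end QuadraticVariation

section Martingale

variable {A : Type*} [CStarAlgebra A] [PartialOrder A]

/-- `c` is a martingale on `I` for the functional `φ` and the filtration `F`: it is adapted and its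
increments are orthogonal to the past. When there are `φ`-preserving conditional expectations
`E_u` onto the algebras `F u` and `φ` is faithful, the latter says that `E_u (c_v) = c_u`. -/
structure IsMartingaleOn {ι : Type*} [Preorder ι] (φ : A →ₚ[ℂ] ℂ) (F : ι →o StarSubalgebra ℂ A)
    (c : ι → A) (I : Set ι) : Prop where
  mem : ∀ u ∈ I, c u ∈ F u
  apply_mul_sub : ∀ u ∈ I, ∀ v ∈ I, u ≤ v → ∀ x ∈ F u, φ (x * (c v - c u)) = 0

namespace IsMartingaleOn

section Preorder

variable {ι : Type*} [Preorder ι] {φ : A →ₚ[ℂ] ℂ} {F : ι →o StarSubalgebra ℂ A} {c : ι → A}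
  {I : Set ι}

theorem mono {J : Set ι} (hc : IsMartingaleOn φ F c I) (hJ : J ⊆ I) : IsMartingaleOn φ F c J :=
  ⟨fun u hu ↦ hc.mem u (hJ hu), fun u hu v hv ↦ hc.apply_mul_sub u (hJ hu) v (hJ hv)⟩

theorem mem_of_le (hc : IsMartingaleOn φ F c I) {x u : ι} (hx : x ∈ I) (hxu : x ≤ u) :
    c x ∈ F u :=
  F.monotone hxu (hc.mem x hx)

end Preorder

section LinearOrder

variable {ι : Type*} [LinearOrder ι] {φ : A →ₚ[ℂ] ℂ} {F : ι →o StarSubalgebra ℂ A} {c : ι → A}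
  {I : Set ι}

theorem quadVarProcess_mem (hc : IsMartingaleOn φ F c I) {s : ℕ → ι} {n : ℕ}
    (hs : ∀ j ≤ n, s j ∈ I) {u : ι} (hu : u ∈ I) : quadVarProcess c s n u ∈ F u := by
  have h_mem : ∀ j ≤ n, c (min (s j) u) ∈ F u := fun j hj ↦
    hc.mem_of_le (min_rec' (· ∈ I) (hs j hj) hu) (min_le_right _ _)
  rw [quadVarProcess, quadVarSum]
  refine sum_mem fun j hj ↦ ?_
  have hjn := Finset.mem_range.1 hj
  have h_sub := sub_mem (h_mem (j + 1) hjn) (h_mem j hjn.le)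
  exact mul_mem (star_mem h_sub) h_sub

variable [StarOrderedRing A]

theorem norm_toPreGNS_sub_sq (hc : IsMartingaleOn φ F c I) {a u v : ι} (ha : a ∈ I) (hu : u ∈ I)
    (hv : v ∈ I) (hau : a ≤ u) (huv : u ≤ v) :
    ‖φ.toPreGNS (c v - c a)‖ ^ 2 =
      ‖φ.toPreGNS (c u - c a)‖ ^ 2 + ‖φ.toPreGNS (c v - c u)‖ ^ 2 := by
  rw [← sub_add_sub_cancel' (c u) (c a) (c v)]
  exact norm_toPreGNS_add_sq <| hc.apply_mul_sub u hu v hv huv _ <|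
    star_mem (sub_mem (hc.mem u hu) (hc.mem_of_le ha hau))

theorem norm_toPreGNS_quadVarProcess_sub_sq_le (hφ : ∀ x y, φ (x * y) = φ (y * x))
    (hc : IsMartingaleOn φ F c I) {s s' : ℕ → ι} {n n' j j' : ℕ} (hs : MonotoneOn s (Iic n))
    (hs' : MonotoneOn s' (Iic n')) (hsI : ∀ i ≤ n, s i ∈ I) (hsI' : ∀ i ≤ n', s' i ∈ I)
    (hj : j < n) (hj' : j' < n') {u v : ι} (hu : u ∈ I) (hv : v ∈ I) (huv : u ≤ v)
    (hju : s j ≤ u) (hvj : v ≤ s (j + 1)) (hju' : s' j' ≤ u) (hvj' : v ≤ s' (j' + 1)) :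
    ‖φ.toPreGNS (quadVarProcess c s n v - quadVarProcess c s' n' v)‖ ^ 2 ≤
      ‖φ.toPreGNS (quadVarProcess c s n u - quadVarProcess c s' n' u)‖ ^ 2 +
        4 * (‖c (s' j') - c (s j)‖ * ‖φ.toPreGNS (c v - c u)‖) ^ 2 := by
  set D := fun r ↦ quadVarProcess c s n r - quadVarProcess c s' n' r
  set g := star (c (s' j') - c (s j))
  have h_incr : D v = D u + (g * (c v - c u) + star (g * (c v - c u))) := by
    rw [← sub_eq_iff_eq_add', sub_sub_sub_comm, quadVarProcess_sub_eq c hs hj hju huv hvj,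
      quadVarProcess_sub_eq c hs' hj' hju' huv hvj', star_sub_mul_sub_sub_eq]
  have hD : D u ∈ F u := sub_mem (hc.quadVarProcess_mem hsI hu) (hc.quadVarProcess_mem hsI' hu)
  have hg : g ∈ F u := star_mem <|
    sub_mem (hc.mem_of_le (hsI' j' hj'.le) hju') (hc.mem_of_le (hsI j hj.le) hju)
  have h_orth : ∀ x ∈ F u, φ (x * (g * (c v - c u))) = 0 := fun x hx ↦ by
    rw [← mul_assoc]
    exact hc.apply_mul_sub u hu v hv huv _ (mul_mem hx hg)
  have h_norm : ‖φ.toPreGNS (g * (c v - c u))‖ ≤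
      ‖c (s' j') - c (s j)‖ * ‖φ.toPreGNS (c v - c u)‖ := by
    simpa only [g, norm_star] using norm_toPreGNS_mul_le g (c v - c u)
  calc ‖φ.toPreGNS (D v)‖ ^ 2
      ≤ ‖φ.toPreGNS (D u)‖ ^ 2 + 4 * ‖φ.toPreGNS (g * (c v - c u))‖ ^ 2 := by
        rw [h_incr]
        exact norm_toPreGNS_add_add_star_sq_le hφ (h_orth _ (star_mem hD)) (h_orth _ hD)
    _ ≤ _ := by gcongr

end LinearOrder

variable [StarOrderedRing A] {φ : A →ₚ[ℂ] ℂ} {F : ℝ →o StarSubalgebra ℂ A} {c : ℝ → A} {a b : ℝ}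

theorem monotoneOn_sub_norm_toPreGNS_quadVarProcess_sub_sq (hφ : ∀ x y, φ (x * y) = φ (y * x))
    (hc : IsMartingaleOn φ F c (Icc a b)) {δ ω : ℝ}
    (hω : ∀ x ∈ Icc a b, ∀ y ∈ Icc a b, dist x y < δ → dist (c x) (c y) ≤ ω)
    {n n' : ℕ} {s s' : ℕ → ℝ} (hs : IsPartition a b δ n s) (hs' : IsPartition a b δ n' s') :
    MonotoneOn (fun u ↦ 4 * (ω * ‖φ.toPreGNS (c u - c a)‖) ^ 2 -
      ‖φ.toPreGNS (quadVarProcess c s n u - quadVarProcess c s' n' u)‖ ^ 2) (Icc a b) := by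
  refine monotoneOn_of_forall_notMem_Ioo
    ((Finset.range (n + 1)).image s ∪ (Finset.range (n' + 1)).image s')
    fun u hu v hv huv hB ↦ ?_
  simp only [Finset.mem_union, Finset.mem_image, Finset.mem_range, Nat.lt_succ_iff] at hB
  obtain ⟨j, hj, hju, hvj⟩ := exists_le_le_succ_of_forall_notMem_Ioo huv
    (hs.left_eq.trans_le hu.1) (hv.2.trans_eq hs.right_eq.symm) fun i hi ↦ hB _ (.inl ⟨i, hi, rfl⟩)
  obtain ⟨j', hj', hju', hvj'⟩ := exists_le_le_succ_of_forall_notMem_Ioo huv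
    (hs'.left_eq.trans_le hu.1) (hv.2.trans_eq hs'.right_eq.symm)
    fun i hi ↦ hB _ (.inr ⟨i, hi, rfl⟩)
  have h_dist : ‖c (s' j') - c (s j)‖ ≤ ω := by
    have hδ := hs.sub_lt j hj
    have hδ' := hs'.sub_lt j' hj'
    rw [← dist_eq_norm]
    refine hω _ (hs'.mem_Icc hj'.le) _ (hs.mem_Icc hj.le) ?_
    rw [Real.dist_eq, abs_sub_lt_iff]
    constructor <;> linarith
  have h_step := hc.norm_toPreGNS_quadVarProcess_sub_sq_le hφ hs.monotoneOn hs'.monotoneOn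
    (fun _ ↦ hs.mem_Icc) (fun _ ↦ hs'.mem_Icc) hj hj' hu hv huv.le hju hvj hju' hvj'
  have h_sq : (‖c (s' j') - c (s j)‖ * ‖φ.toPreGNS (c v - c u)‖) ^ 2 ≤
      (ω * ‖φ.toPreGNS (c v - c u)‖) ^ 2 := by gcongr
  have h_pyth := hc.norm_toPreGNS_sub_sq (left_mem_Icc.2 hs.le) hu hv hu.1 huv.le
  simp only [mul_pow] at h_step h_sq ⊢
  rw [h_pyth]
  linarith

theorem norm_toPreGNS_quadVarSum_sub_le (hφ : ∀ x y, φ (x * y) = φ (y * x))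
    (hc : IsMartingaleOn φ F c (Icc a b)) {δ ω : ℝ} (hω₀ : 0 ≤ ω)
    (hω : ∀ x ∈ Icc a b, ∀ y ∈ Icc a b, dist x y < δ → dist (c x) (c y) ≤ ω)
    {n n' : ℕ} {s s' : ℕ → ℝ} (hs : IsPartition a b δ n s) (hs' : IsPartition a b δ n' s') :
    ‖φ.toPreGNS (quadVarSum c s n - quadVarSum c s' n')‖ ≤
      2 * (ω * ‖φ.toPreGNS (c b - c a)‖) := by
  have h := hc.monotoneOn_sub_norm_toPreGNS_quadVarProcess_sub_sq hφ hω hs hs'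
    (left_mem_Icc.2 hs.le) (right_mem_Icc.2 hs.le) hs.le
  simp only [hs.quadVarProcess_left, hs'.quadVarProcess_left, hs.quadVarProcess_right,
    hs'.quadVarProcess_right, sub_self, map_zero, norm_zero, mul_zero, ne_eq, OfNat.ofNat_ne_zero,
    not_false_eq_true, zero_pow, sub_nonneg] at h
  refine le_of_sq_le_sq ?_ (by positivity)
  linarith

end IsMartingaleOn

theorem quadratic_variation_L1_cauchy_general [StarOrderedRing A] {φ : A →ₚ[ℂ] ℂ}
    (hφ : ∀ x y, φ (x * y) = φ (y * x)) {F : ℝ →o StarSubalgebra ℂ A} {c : ℝ → A} {a b : ℝ}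
    (hc : IsMartingaleOn φ F c (Icc a b)) (hcont : ContinuousOn c (Icc a b)) {ε : ℝ}
    (hε : 0 < ε) :
    ∃ δ : ℝ, 0 < δ ∧ ∀ (n n' : ℕ) (s s' : ℕ → ℝ),
      IsPartition a b δ n s → IsPartition a b δ n' s' →
        ‖φ (CFC.abs (quadVarSum c s n - quadVarSum c s' n'))‖ < ε := by
  set M := ‖φ.toPreGNS 1‖ * (2 * ‖φ.toPreGNS (c b - c a)‖)
  obtain ⟨ω, hω, hMω⟩ : ∃ ω > 0, M * ω < ε := by
    have hM : 0 ≤ M := by positivity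
    exact ⟨ε / (M + 1), by positivity, by rw [mul_div_assoc', div_lt_iff₀] <;> nlinarith⟩
  obtain ⟨δ, hδ, hδω⟩ := Metric.uniformContinuousOn_iff_le.1
    (isCompact_Icc.uniformContinuousOn_of_continuous hcont) ω hω
  refine ⟨δ, hδ, fun n n' s s' hs hs' ↦ ?_⟩
  calc ‖φ (CFC.abs (quadVarSum c s n - quadVarSum c s' n'))‖
      ≤ ‖φ.toPreGNS 1‖ * ‖φ.toPreGNS (quadVarSum c s n - quadVarSum c s' n')‖ :=
        norm_apply_cfcAbs_le φ _
    _ ≤ ‖φ.toPreGNS 1‖ * (2 * (ω * ‖φ.toPreGNS (c b - c a)‖)) := by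
        gcongr
        exact hc.norm_toPreGNS_quadVarSum_sub_le hφ hω.le
          (fun x hx y hy hxy ↦ hδω x hx y hy hxy.le) hs hs'
    _ = M * ω := by ring
    _ < ε := hMω

end Martingale

section WhiteNoise

variable {A : Type*} [CStarAlgebra A] {τ : A →ₗ[ℂ] ℂ}

/-- A tracial state as a bundled positive linear functional, giving access to its GNS space. -/
noncomputable def IsTracialState.toPositiveLinearMap [PartialOrder A] [StarOrderedRing A]
    (hτ : IsTracialState τ) : A →ₚ[ℂ] ℂ :=
  .mk₀ τ fun x hx ↦ by
    obtain ⟨y, rfl⟩ := CStarAlgebra.nonneg_iff_eq_star_mul_self.1 hx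
    exact hτ.pos y

namespace WhiteNoise

variable (W : WhiteNoise A τ)

/-- The filtration `u ↦ A_{[0,u]}`. -/
noncomputable def filtration : ℝ →o StarSubalgebra ℂ A where
  toFun u := W.alg 0 u
  monotone' _ _ huv := W.alg_mono _ _ _ _ le_rfl (EReal.coe_le_coe_iff.2 huv)

theorem apply_mul_eq_zero {u v : ℝ} {x y : A} (hx : x ∈ W.alg 0 u) (hy : y ∈ W.alg u v)
    (hy₀ : W.E0 y = 0) : τ (x * y) = 0 := by
  have h_past : W.E 0 u y = 0 := by
    rw [← (W.E_condExp u v).map_of_mem y hy, W.indep, hy₀]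
    exact fun r ⟨⟨_, hru⟩, hur, _⟩ ↦ lt_asymm hru hur
  have h_proj : W.E 0 u (x * y) = x * W.E 0 u y := by
    simpa only [mul_one] using (W.E_condExp 0 u).bimodule x hx 1 (one_mem _) y
  rw [← (W.E_condExp 0 u).trace_eq, h_proj, h_past, mul_zero, map_zero]

theorem sub_mem_alg {c : ℝ → A} (hadapt : ∀ t : ℝ, 0 ≤ t → c t ∈ W.alg 0 (t : EReal))
    (hcoc : ∀ s t : ℝ, 0 ≤ s → 0 ≤ t → c (s + t) = W.S t (c s) + c t) {u v : ℝ} (hu : 0 ≤ u)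
    (huv : u ≤ v) : c v - c u ∈ W.alg u v := by
  have h_shift : c v - c u = W.S u (c (v - u)) := by
    rw [sub_eq_iff_eq_add, ← hcoc (v - u) u (sub_nonneg.2 huv) hu, sub_add_cancel]
  have h_image := mem_image_of_mem (W.S u) (hadapt (v - u) (sub_nonneg.2 huv))
  rwa [W.S_alg, zero_add, ← EReal.coe_add, sub_add_cancel, ← h_shift] at h_image

theorem isMartingaleOn [PartialOrder A] [StarOrderedRing A] {c : ℝ → A}
    (hadapt : ∀ t : ℝ, 0 ≤ t → c t ∈ W.alg 0 (t : EReal))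
    (hcoc : ∀ s t : ℝ, 0 ≤ s → 0 ≤ t → c (s + t) = W.S t (c s) + c t)
    (hcentred : ∀ t : ℝ, 0 ≤ t → W.E0 (c t) = 0) :
    IsMartingaleOn W.tracial.toPositiveLinearMap W.filtration c (Ici 0) where
  mem := hadapt
  apply_mul_sub u hu v hv huv _ hx :=
    W.apply_mul_eq_zero hx (W.sub_mem_alg hadapt hcoc hu huv) <| by
      rw [map_sub, hcentred v hv, hcentred u hu, sub_zero]

end WhiteNoise

end WhiteNoise

/-- Existence of the quadratic variation as an `L¹`-Cauchy net: for a centred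
norm-continuous additive cocycle `c`, the discrete quadratic variation sums
`Q_P = Σ_j (c_{s_{j+1}} - c_{s_j})* (c_{s_{j+1}} - c_{s_j})` over partitions `P` of `[0, t]`
form a Cauchy net for the norm `‖x‖₁ = τ(|x|)` as the mesh tends to `0`. -/
theorem quadratic_variation_L1_cauchy {A : Type*} [CStarAlgebra A]
    [PartialOrder A] [StarOrderedRing A]
    (τ : A →ₗ[ℂ] ℂ) (W : WhiteNoise A τ) (c : ℝ → A)
    (hadapt : ∀ t : ℝ, 0 ≤ t → c t ∈ W.alg 0 (t : EReal))
    (hcoc : ∀ s t : ℝ, 0 ≤ s → 0 ≤ t → c (s + t) = W.S t (c s) + c t)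
    (hcentred : ∀ t : ℝ, 0 ≤ t → W.E0 (c t) = 0)
    (hcont : ContinuousOn c (Set.Ici 0)) :
    ∀ t : ℝ, 0 < t → ∀ ε : ℝ, 0 < ε → ∃ δ : ℝ, 0 < δ ∧
      ∀ (n n' : ℕ) (s s' : ℕ → ℝ),
        1 ≤ n → s 0 = 0 → s n = t → (∀ j < n, s j < s (j + 1)) →
          (∀ j < n, s (j + 1) - s j < δ) →
        1 ≤ n' → s' 0 = 0 → s' n' = t → (∀ j < n', s' j < s' (j + 1)) →
          (∀ j < n', s' (j + 1) - s' j < δ) →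
        ‖τ (CFC.sqrt
            (star ((∑ j ∈ Finset.range n,
                      star (c (s (j + 1)) - c (s j)) * (c (s (j + 1)) - c (s j))) -
                   (∑ j ∈ Finset.range n',
                      star (c (s' (j + 1)) - c (s' j)) * (c (s' (j + 1)) - c (s' j)))) *
                  ((∑ j ∈ Finset.range n,
                      star (c (s (j + 1)) - c (s j)) * (c (s (j + 1)) - c (s j))) -
                   (∑ j ∈ Finset.range n',
                      star (c (s' (j + 1)) - c (s' j)) * (c (s' (j + 1)) - c (s' j))))))‖
          < ε := by
  intro t _ ε hε
  obtain ⟨δ, hδ, h⟩ := quadratic_variation_L1_cauchy_general W.tracial.tracial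
    ((W.isMartingaleOn hadapt hcoc hcentred).mono Icc_subset_Ici_self)
    (hcont.mono Icc_subset_Ici_self) hε
  exact ⟨δ, hδ, fun n n' s s' _ h0 ht hs hsδ _ h0' ht' hs' hsδ' ↦
    h n n' s s' ⟨h0, ht, fun j hj ↦ (hs j hj).le, hsδ⟩ ⟨h0', ht', fun j hj ↦ (hs' j hj).le, hsδ'⟩⟩
end
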